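/- Assume a (σ,τ)-Pultr template with P = Š_1 the σ-tree with ar(Š) vertices related by a single Š-edge (for a fixed σ-symbol Š) and each Q_R a σ-tree, let Γ be its central Pultr functor, and let Ω be the construction described in the context. Then for every σ-structure A and every τ-structure B, there is a homomorphism Γ(A) → B if and only if there is a homomorphism A → Ω(B). -/

import Mathlib

/-!
The adjunction comes from recording the values of a map along all homomorphisms from trees.

Given `f : Γ(A) → B`, a vertex `a` of `A` is sent to the tuple whose entry at a V-term `t` is the
set of all composites `f ∘ Γ(h)`, where `h : T(t) → A` is a homomorphism mapping the root to `a`.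
If `(a_1, …, a_k)` is an edge of `A`, homomorphisms `h_i : T(t_i) → A` mapping the root to `a_i`
glue to a homomorphism on `T(edge_S(t_1, …, t_k))`, so that every member of `⨉_t` is again of the
form `f ∘ Γ(h)`; for an `Š`-edge `e` the witness is `f(e)`.

Conversely, given a homomorphism `φ : A → Ω(B)`, let `f` send each `Š`-edge of `A` to a witness for
its image.  By induction on the term `t`, the map `f ∘ Γ(h)` lies in `φ(h(root))_t` for every
homomorphism `h : T(t) → A`.  In particular `f ∘ Γ(h)` is a homomorphism for every `h : Q_R → A`,
and evaluating it on the tuple of selected edges of `Q_R` shows that `f` preserves `R`.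
-/


/-- A relational signature: a type of relation symbols, each with a positive arity. -/
structure Signature : Type 1 where
  symb : Type
  ar : symb → ℕ
  ar_pos : ∀ R, 0 < ar R

/-- A relational structure over the signature `σ`. -/
structure Struct (σ : Signature) : Type 1 where
  dom : Type
  rel : ∀ R : σ.symb, Set (Fin (σ.ar R) → dom)

variable {σ τ υ : Signature}

/-- `f` is a homomorphism of `σ`-structures from `A` to `B`. -/
def IsHom (A B : Struct σ) (f : A.dom → B.dom) : Prop :=
  ∀ R : σ.symb, ∀ x ∈ A.rel R, (fun i => f (x i)) ∈ B.rel R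

/-- `A → B`: there exists a homomorphism from `A` to `B`. -/
def HomEx (A B : Struct σ) : Prop := ∃ f, IsHom A B f

/-- Terms over `σ` whose denotation is a tree rooted in a vertex: `vertex` is a V-term, and
`pr R i ts` denotes the V-term `pr_i(edge_R(ts))`.  (An R-term `edge_R(t_1, …, t_k)` is
represented by the symbol `R` together with the tuple `ts` of V-terms.) -/
inductive VTerm (σ : Signature) : Type
  | vertex : VTerm σ
  | pr (R : σ.symb) (i : Fin (σ.ar R)) (ts : Fin (σ.ar R) → VTerm σ) : VTerm σ

/-- The domain of the tree denoted by a V-term. -/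
def VTerm.domType : VTerm σ → Type
  | .vertex => PUnit
  | .pr R _ ts => (i : Fin (σ.ar R)) × (ts i).domType

/-- The root of the tree denoted by a V-term. -/
def VTerm.root : (t : VTerm σ) → t.domType
  | .vertex => PUnit.unit
  | .pr _ i ts => ⟨i, (ts i).root⟩

/-- The domain of the tree denoted by the R-term `edge_R(ts)`: the disjoint union of the
domains of the subtrees. -/
def edgeDom (R : σ.symb) (ts : Fin (σ.ar R) → VTerm σ) : Type :=
  (i : Fin (σ.ar R)) × (ts i).domType

/-- The root edge of the tree denoted by the R-term `edge_R(ts)`. -/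
def edgeRoot (R : σ.symb) (ts : Fin (σ.ar R) → VTerm σ) : Fin (σ.ar R) → edgeDom R ts :=
  fun i => ⟨i, (ts i).root⟩

/-- The relations of the tree denoted by a V-term: the relations of the disjoint subtrees,
together with the root edge. -/
def VTerm.rel : (t : VTerm σ) → ∀ S : σ.symb, Set (Fin (σ.ar S) → t.domType)
  | .vertex, _ => ∅
  | .pr R _ ts, S =>
      {x | ∃ i : Fin (σ.ar R), ∃ y ∈ (ts i).rel S, x = fun j => ⟨i, y j⟩} ∪
      {x | ∃ h : R = S, x = fun j => edgeRoot R ts (Fin.cast (congrArg σ.ar h.symm) j)}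

/-- The tree `T(t)` denoted by a V-term `t`. -/
def VTerm.tree (t : VTerm σ) : Struct σ := ⟨t.domType, t.rel⟩

/-- The tree `T(t)` denoted by the R-term `t = edge_R(ts)`. -/
def ETerm.tree (R : σ.symb) (ts : Fin (σ.ar R) → VTerm σ) : Struct σ where
  dom := edgeDom R ts
  rel S :=
    {x | ∃ i : Fin (σ.ar R), ∃ y ∈ (ts i).rel S, x = fun j => ⟨i, y j⟩} ∪
    {x | ∃ h : R = S, x = fun j => edgeRoot R ts (Fin.cast (congrArg σ.ar h.symm) j)}

/-- The V-subterms of a V-term. -/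
def VTerm.vsub : VTerm σ → Set (VTerm σ)
  | .vertex => {.vertex}
  | .pr R i ts => insert (.pr R i ts) (⋃ j, (ts j).vsub)

/-- The S-subterms of a V-term, for each `σ`-symbol `S` (an S-term `edge_S(us)` being
represented by the tuple `us`). -/
def VTerm.esub : VTerm σ → ∀ S : σ.symb, Set (Fin (σ.ar S) → VTerm σ)
  | .vertex, _ => ∅
  | .pr R _ ts, S =>
      {us | ∃ h : R = S, us = fun j => ts (Fin.cast (congrArg σ.ar h.symm) j)} ∪
      {us | ∃ j, us ∈ (ts j).esub S}

/-- A term is either a V-term or an R-term `edge_R(ts)` for some symbol `R`. -/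
def Term (σ : Signature) : Type := VTerm σ ⊕ (Σ S : σ.symb, Fin (σ.ar S) → VTerm σ)

/-- The tree denoted by a term. -/
def Term.tree : Term σ → Struct σ
  | .inl t => t.tree
  | .inr ⟨S, ts⟩ => ETerm.tree S ts

/-- The V-subterms of a term. -/
def Term.vsub : Term σ → Set (VTerm σ)
  | .inl t => t.vsub
  | .inr ⟨_, ts⟩ => ⋃ j, (ts j).vsub

/-- The S-subterms of a term. -/
def Term.esub : Term σ → ∀ S : σ.symb, Set (Fin (σ.ar S) → VTerm σ)
  | .inl t => t.esub
  | .inr ⟨R, ts⟩ => fun S =>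
      {us | ∃ h : R = S, us = fun j => ts (Fin.cast (congrArg σ.ar h.symm) j)} ∪
      {us | ∃ j, us ∈ (ts j).esub S}

/-- `𝒯_V`: all V-subterms of the chosen terms `t_R`. -/
def TVs (tq : τ.symb → Term σ) : Set (VTerm σ) := ⋃ R, (tq R).vsub

/-- `𝒯_S`: all S-subterms of the chosen terms `t_R`. -/
def TEs (tq : τ.symb → Term σ) (S : σ.symb) : Set (Fin (σ.ar S) → VTerm σ) := ⋃ R, (tq R).esub S

/-- The central Pultr functor for the template where `P = Š₁` consists of a single `Š`-edge
(`Š = Sc`), `Q_R = T(tq R)`, and `ε_{i,R}` selects the `Š`-edge `x R i` of `Q_R`. -/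
def GammaE (Sc : σ.symb) (tq : τ.symb → Term σ)
    (x : ∀ R : τ.symb, Fin (τ.ar R) → (Fin (σ.ar Sc) → ((tq R).tree).dom))
    (A : Struct σ) : Struct τ where
  dom := {e : Fin (σ.ar Sc) → A.dom // e ∈ A.rel Sc}
  rel R := {y | ∃ h : ((tq R).tree).dom → A.dom, IsHom ((tq R).tree) A h ∧
      ∀ i, (y i).1 = fun j => h (x R i j)}

/-- Domain of `Ω(B)`: tuples of sets of homomorphisms `Γ(T(t)) → B`, indexed by `t ∈ 𝒯_V`,
whose entry at `vertex` is `{∅}` (the set containing the empty map, i.e. the full set of maps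
from the empty domain of `Γ(T(vertex))`). -/
def OmEDom (Sc : σ.symb) (tq : τ.symb → Term σ)
    (x : ∀ R : τ.symb, Fin (τ.ar R) → (Fin (σ.ar Sc) → ((tq R).tree).dom))
    (B : Struct τ) : Type :=
  {U : (t : {t : VTerm σ // t ∈ TVs tq}) → Set ((GammaE Sc tq x t.1.tree).dom → B.dom) //
    (∀ t, ∀ f ∈ U t, IsHom (GammaE Sc tq x t.1.tree) B f) ∧
    (∀ h : VTerm.vertex ∈ TVs tq, U ⟨.vertex, h⟩ = Set.univ)}

open Classical in
/-- The entry of `U` at the V-term `t` (by convention `∅` if `t ∉ 𝒯_V`). -/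
noncomputable def UextE (Sc : σ.symb) (tq : τ.symb → Term σ)
    (x : ∀ R : τ.symb, Fin (τ.ar R) → (Fin (σ.ar Sc) → ((tq R).tree).dom))
    (B : Struct τ) (U : OmEDom Sc tq x B) (t : VTerm σ) :
    Set ((GammaE Sc tq x t.tree).dom → B.dom) :=
  if h : t ∈ TVs tq then U.1 ⟨t, h⟩ else ∅

/-- Restriction of a map defined on the `Š`-edges of `T(edge_S(ts))` to the `Š`-edges of the
`i`-th subtree. -/
def restrE (Sc : σ.symb) (tq : τ.symb → Term σ)
    (x : ∀ R : τ.symb, Fin (τ.ar R) → (Fin (σ.ar Sc) → ((tq R).tree).dom))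
    (B : Struct τ) (S : σ.symb) (ts : Fin (σ.ar S) → VTerm σ) (i : Fin (σ.ar S))
    (g : (GammaE Sc tq x (ETerm.tree S ts)).dom → B.dom) :
    (GammaE Sc tq x (ts i).tree).dom → B.dom :=
  fun y => g ⟨fun j => ⟨i, y.1 j⟩, Or.inl ⟨i, y.1, y.2, rfl⟩⟩

/-- `⨉_t(Us) = {f₁ ∪ ⋯ ∪ f_k : f_i ∈ (Us i)_{ts i}}` for the S-term `t = edge_S(ts)` with
`S ≠ Š`: maps on the `Š`-edges of `T(t)` all of whose restrictions lie in the prescribed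
sets. -/
def timesNE (Sc : σ.symb) (tq : τ.symb → Term σ)
    (x : ∀ R : τ.symb, Fin (τ.ar R) → (Fin (σ.ar Sc) → ((tq R).tree).dom))
    (B : Struct τ) (S : σ.symb) (ts : Fin (σ.ar S) → VTerm σ)
    (Us : Fin (σ.ar S) → OmEDom Sc tq x B) :
    Set ((GammaE Sc tq x (ETerm.tree S ts)).dom → B.dom) :=
  {g | ∀ i, restrE Sc tq x B S ts i g ∈ UextE Sc tq x B (Us i) (ts i)}

theorem rootEdgeMem (Sc : σ.symb) (ts : Fin (σ.ar Sc) → VTerm σ) :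
    edgeRoot Sc ts ∈ (ETerm.tree Sc ts).rel Sc :=
  Or.inr ⟨rfl, rfl⟩

/-- `⨉_t(Us; e) = {f₁ ∪ ⋯ ∪ f_k ∪ (r_t ↦ e) : f_i ∈ (Us i)_{ts i}}` for the `Š`-term
`t = edge_Š(ts)` with witness `e`. -/
def timesW (Sc : σ.symb) (tq : τ.symb → Term σ)
    (x : ∀ R : τ.symb, Fin (τ.ar R) → (Fin (σ.ar Sc) → ((tq R).tree).dom))
    (B : Struct τ) (ts : Fin (σ.ar Sc) → VTerm σ)
    (Us : Fin (σ.ar Sc) → OmEDom Sc tq x B) (e : B.dom) :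
    Set ((GammaE Sc tq x (ETerm.tree Sc ts)).dom → B.dom) :=
  {g | (∀ i, restrE Sc tq x B Sc ts i g ∈ UextE Sc tq x B (Us i) (ts i)) ∧
       g ⟨edgeRoot Sc ts, rootEdgeMem Sc ts⟩ = e}

/-- `e ∈ B` is a witness for the tuple `Us` of elements of `Ω(B)`: conditions (B1) and (B2). -/
def IsWitness (Sc : σ.symb) (tq : τ.symb → Term σ)
    (x : ∀ R : τ.symb, Fin (τ.ar R) → (Fin (σ.ar Sc) → ((tq R).tree).dom))
    (B : Struct τ) (Us : Fin (σ.ar Sc) → OmEDom Sc tq x B) (e : B.dom) : Prop :=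
  ∀ ts ∈ TEs tq Sc,
    (∀ i : Fin (σ.ar Sc), VTerm.pr Sc i ts ∈ TVs tq →
        ∀ g ∈ timesW Sc tq x B ts Us e, g ∈ UextE Sc tq x B (Us i) (.pr Sc i ts)) ∧
    (∀ g ∈ timesW Sc tq x B ts Us e, IsHom (GammaE Sc tq x (ETerm.tree Sc ts)) B g)

/-- The right adjoint `Ω` for the template with `P = Š₁`. -/
noncomputable def OmegaE (Sc : σ.symb) (tq : τ.symb → Term σ)
    (x : ∀ R : τ.symb, Fin (τ.ar R) → (Fin (σ.ar Sc) → ((tq R).tree).dom))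
    (B : Struct τ) : Struct σ where
  dom := OmEDom Sc tq x B
  rel S := {Us |
    (S ≠ Sc →
      (∀ ts ∈ TEs tq S, ∀ i : Fin (σ.ar S), VTerm.pr S i ts ∈ TVs tq →
          ∀ g ∈ timesNE Sc tq x B S ts Us, g ∈ UextE Sc tq x B (Us i) (.pr S i ts)) ∧
      (∀ ts ∈ TEs tq S, ∀ g ∈ timesNE Sc tq x B S ts Us,
          IsHom (GammaE Sc tq x (ETerm.tree S ts)) B g)) ∧
    (∀ heq : S = Sc, ∃ e : B.dom,
        IsWitness Sc tq x B (fun j => Us (Fin.cast (congrArg σ.ar heq.symm) j)) e)}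

/-! ### Homomorphisms from trees -/

theorem IsHom.comp {A B C : Struct σ} {g : B.dom → C.dom} {f : A.dom → B.dom}
    (hg : IsHom B C g) (hf : IsHom A B f) : IsHom A C (g ∘ f) :=
  fun R y hy => hg R _ (hf R y hy)

theorem isHom_edgeTree_iff {A : Struct σ} {S : σ.symb} {ts : Fin (σ.ar S) → VTerm σ}
    {h : (ETerm.tree S ts).dom → A.dom} :
    IsHom (ETerm.tree S ts) A h ↔
      (∀ i, IsHom (ts i).tree A fun v => h ⟨i, v⟩) ∧ h ∘ edgeRoot S ts ∈ A.rel S := by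
  constructor
  · intro hh
    exact ⟨fun i R y hy => hh R _ (Or.inl ⟨i, y, hy, rfl⟩), hh S _ (rootEdgeMem S ts)⟩
  · rintro ⟨hbranch, hroot⟩ R y (⟨i, z, hz, rfl⟩ | ⟨rfl, rfl⟩)
    · exact hbranch i R z hz
    · exact hroot

/-! ### Subterms -/

theorem VTerm.mem_vsub_self (t : VTerm σ) : t ∈ t.vsub := by
  cases t with
  | vertex => exact rfl
  | pr R i ts => exact Or.inl rfl

theorem VTerm.mem_esub_of_pr_mem_vsub {t : VTerm σ} {S : σ.symb} {i : Fin (σ.ar S)}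
    {us : Fin (σ.ar S) → VTerm σ} (h : .pr S i us ∈ t.vsub) : us ∈ t.esub S := by
  induction t with
  | vertex => cases h
  | pr R k ts ih =>
    rcases h with h | h
    · cases h
      exact Or.inl ⟨rfl, rfl⟩
    · obtain ⟨j, hj⟩ := Set.mem_iUnion.1 h
      exact Or.inr ⟨j, ih j hj⟩

theorem VTerm.mem_vsub_of_mem_esub {t : VTerm σ} {S : σ.symb} {us : Fin (σ.ar S) → VTerm σ}
    (h : us ∈ t.esub S) (j : Fin (σ.ar S)) : us j ∈ t.vsub := by
  induction t with
  | vertex => cases h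
  | pr R i ts ih =>
    rcases h with ⟨rfl, rfl⟩ | ⟨k, hk⟩
    · exact Or.inr (Set.mem_iUnion.2 ⟨j, (ts j).mem_vsub_self⟩)
    · exact Or.inr (Set.mem_iUnion.2 ⟨k, ih k hk⟩)

theorem Term.mem_esub_of_pr_mem_vsub {T : Term σ} {S : σ.symb} {i : Fin (σ.ar S)}
    {us : Fin (σ.ar S) → VTerm σ} (h : .pr S i us ∈ T.vsub) : us ∈ T.esub S := by
  rcases T with t | ⟨R, ts⟩
  · exact VTerm.mem_esub_of_pr_mem_vsub h
  · obtain ⟨k, hk⟩ := Set.mem_iUnion.1 h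
    exact Or.inr ⟨k, VTerm.mem_esub_of_pr_mem_vsub hk⟩

theorem Term.mem_vsub_of_mem_esub {T : Term σ} {S : σ.symb} {us : Fin (σ.ar S) → VTerm σ}
    (h : us ∈ T.esub S) (j : Fin (σ.ar S)) : us j ∈ T.vsub := by
  rcases T with t | ⟨R, ts⟩
  · exact VTerm.mem_vsub_of_mem_esub h j
  · rcases h with ⟨rfl, rfl⟩ | ⟨k, hk⟩
    · exact Set.mem_iUnion.2 ⟨j, (ts j).mem_vsub_self⟩
    · exact Set.mem_iUnion.2 ⟨k, VTerm.mem_vsub_of_mem_esub hk j⟩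

theorem mem_TEs_of_pr_mem_TVs {tq : τ.symb → Term σ} {S : σ.symb} {i : Fin (σ.ar S)}
    {us : Fin (σ.ar S) → VTerm σ} (h : .pr S i us ∈ TVs tq) : us ∈ TEs tq S := by
  obtain ⟨R, hR⟩ := Set.mem_iUnion.1 h
  exact Set.mem_iUnion.2 ⟨R, Term.mem_esub_of_pr_mem_vsub hR⟩

theorem mem_TVs_of_mem_TEs {tq : τ.symb → Term σ} {S : σ.symb} {us : Fin (σ.ar S) → VTerm σ}
    (h : us ∈ TEs tq S) (j : Fin (σ.ar S)) : us j ∈ TVs tq := by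
  obtain ⟨R, hR⟩ := Set.mem_iUnion.1 h
  exact Set.mem_iUnion.2 ⟨R, Term.mem_vsub_of_mem_esub hR j⟩

theorem mem_TVs_of_eq_inl {tq : τ.symb → Term σ} {R : τ.symb} {t : VTerm σ}
    (h : tq R = .inl t) : t ∈ TVs tq :=
  Set.mem_iUnion.2 ⟨R, h ▸ t.mem_vsub_self⟩

theorem mem_TEs_of_eq_inr {tq : τ.symb → Term σ} {R : τ.symb} {S : σ.symb}
    {ts : Fin (σ.ar S) → VTerm σ} (h : tq R = .inr ⟨S, ts⟩) : ts ∈ TEs tq S :=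
  Set.mem_iUnion.2 ⟨R, h ▸ Or.inl ⟨rfl, rfl⟩⟩

section

variable {Sc : σ.symb} {tq : τ.symb → Term σ}
  {x : ∀ R : τ.symb, Fin (τ.ar R) → (Fin (σ.ar Sc) → ((tq R).tree).dom)}
  {A C : Struct σ} {B : Struct τ}

/-! ### Functoriality of `Γ` -/

/-- The action `Γ(h)` of the central Pultr functor on a homomorphism `h`: the coordinatewise image
of `Š`-edges. -/
def IsHom.gammaMap {h : C.dom → A.dom} (hh : IsHom C A h) :
    (GammaE Sc tq x C).dom → (GammaE Sc tq x A).dom :=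
  fun e => ⟨h ∘ e.1, hh Sc e.1 e.2⟩

theorem IsHom.isHom_gammaMap {h : C.dom → A.dom} (hh : IsHom C A h) :
    IsHom (GammaE Sc tq x C) (GammaE Sc tq x A) hh.gammaMap := by
  rintro R y ⟨k, hk, hy⟩
  exact ⟨h ∘ k, hh.comp hk, fun i => congrArg (h ∘ ·) (hy i)⟩

theorem selectedEdges_mem_rel_GammaE (hx : ∀ R i, x R i ∈ ((tq R).tree).rel Sc) (R : τ.symb) :
    (fun i => ⟨x R i, hx R i⟩) ∈ (GammaE Sc tq x (tq R).tree).rel R :=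
  ⟨id, fun _ _ hz => hz, fun _ => rfl⟩

theorem eq_of_restrE_eq_of_ne {S : σ.symb} (hS : S ≠ Sc) {ts : Fin (σ.ar S) → VTerm σ}
    {g g' : (GammaE Sc tq x (ETerm.tree S ts)).dom → B.dom}
    (h : ∀ i, restrE Sc tq x B S ts i g = restrE Sc tq x B S ts i g') : g = g' := by
  funext ⟨e, he⟩
  obtain ⟨i, y, hy, rfl⟩ | ⟨rfl, -⟩ := id he
  · exact congrFun (h i) ⟨y, hy⟩
  · exact absurd rfl hS

theorem eq_of_restrE_eq_of_root_eq {ts : Fin (σ.ar Sc) → VTerm σ}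
    {g g' : (GammaE Sc tq x (ETerm.tree Sc ts)).dom → B.dom}
    (h : ∀ i, restrE Sc tq x B Sc ts i g = restrE Sc tq x B Sc ts i g')
    (hroot : g ⟨edgeRoot Sc ts, rootEdgeMem Sc ts⟩ = g' ⟨edgeRoot Sc ts, rootEdgeMem Sc ts⟩) :
    g = g' := by
  funext ⟨e, he⟩
  obtain ⟨i, y, hy, rfl⟩ | ⟨-, rfl⟩ := id he
  · exact congrFun (h i) ⟨y, hy⟩
  · exact hroot

/-! ### The structure `Ω(B)` -/

theorem mem_UextE {U : OmEDom Sc tq x B} {t : VTerm σ}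
    {g : (GammaE Sc tq x t.tree).dom → B.dom} :
    g ∈ UextE Sc tq x B U t ↔ ∃ ht : t ∈ TVs tq, g ∈ U.1 ⟨t, ht⟩ := by
  by_cases ht : t ∈ TVs tq <;> simp [UextE, ht]

theorem isHom_of_mem_UextE {U : OmEDom Sc tq x B} {t : VTerm σ}
    {g : (GammaE Sc tq x t.tree).dom → B.dom} (hg : g ∈ UextE Sc tq x B U t) :
    IsHom (GammaE Sc tq x t.tree) B g := by
  obtain ⟨ht, hg⟩ := mem_UextE.1 hg
  exact U.2.1 ⟨t, ht⟩ g hg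

/-- The condition that an edge term `t = edge_S(ts)` imposes on an edge `Us` of `Ω(B)`, with an
arbitrary set `X` of maps in place of `⨉_t`: it is (A1), (A2) for `X = timesNE` and (B1), (B2) for
`X = timesW`. -/
def EdgeCondition {S : σ.symb} (Us : Fin (σ.ar S) → OmEDom Sc tq x B)
    (ts : Fin (σ.ar S) → VTerm σ)
    (X : Set ((GammaE Sc tq x (ETerm.tree S ts)).dom → B.dom)) : Prop :=
  (∀ i, .pr S i ts ∈ TVs tq → ∀ g ∈ X, g ∈ UextE Sc tq x B (Us i) (.pr S i ts)) ∧
    ∀ g ∈ X, IsHom (GammaE Sc tq x (ETerm.tree S ts)) B g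

theorem mem_rel_OmegaE_of_ne {S : σ.symb} (hS : S ≠ Sc)
    {Us : Fin (σ.ar S) → OmEDom Sc tq x B} :
    Us ∈ (OmegaE Sc tq x B).rel S ↔
      ∀ ts ∈ TEs tq S, EdgeCondition Us ts (timesNE Sc tq x B S ts Us) := by
  constructor
  · intro hUs ts hts
    exact ⟨(hUs.1 hS).1 ts hts, (hUs.1 hS).2 ts hts⟩
  · intro hUs
    exact ⟨fun _ => ⟨fun ts hts => (hUs ts hts).1, fun ts hts => (hUs ts hts).2⟩,
      fun heq => absurd heq hS⟩

theorem mem_rel_OmegaE_self {Us : Fin (σ.ar Sc) → OmEDom Sc tq x B} :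
    Us ∈ (OmegaE Sc tq x B).rel Sc ↔ ∃ e, IsWitness Sc tq x B Us e :=
  ⟨fun hUs => hUs.2 rfl, fun hUs => ⟨fun hne => absurd rfl hne, fun _ => hUs⟩⟩

theorem isWitness_iff_edgeCondition {Us : Fin (σ.ar Sc) → OmEDom Sc tq x B} {e : B.dom} :
    IsWitness Sc tq x B Us e ↔
      ∀ ts ∈ TEs tq Sc, EdgeCondition Us ts (timesW Sc tq x B ts Us e) :=
  Iff.rfl

/-! ### From `Γ(A) → B` to `A → Ω(B)` -/

/-- The set of all composites `f ∘ Γ(h)` where `h : C → A` is a homomorphism belonging to `H`. -/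
def pullbacks (f : (GammaE Sc tq x A).dom → B.dom) (C : Struct σ) (H : Set (C.dom → A.dom)) :
    Set ((GammaE Sc tq x C).dom → B.dom) :=
  {g | ∃ h ∈ H, ∃ hh : IsHom C A h, g = f ∘ hh.gammaMap}

theorem pullbacks_mono (f : (GammaE Sc tq x A).dom → B.dom) {H H' : Set (C.dom → A.dom)}
    (hH : H ⊆ H') : pullbacks f C H ⊆ pullbacks f C H' :=
  fun _ ⟨h, hmem, hg⟩ => ⟨h, hH hmem, hg⟩

theorem isHom_of_mem_pullbacks {f : (GammaE Sc tq x A).dom → B.dom}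
    (hf : IsHom (GammaE Sc tq x A) B f) {H : Set (C.dom → A.dom)}
    {g : (GammaE Sc tq x C).dom → B.dom} (hg : g ∈ pullbacks f C H) :
    IsHom (GammaE Sc tq x C) B g := by
  obtain ⟨h, -, hh, rfl⟩ := hg
  exact hf.comp hh.isHom_gammaMap

theorem pullbacks_vertex (f : (GammaE Sc tq x A).dom → B.dom) (a : A.dom) :
    pullbacks f VTerm.vertex.tree {h | h (VTerm.root (σ := σ) .vertex) = a} = Set.univ :=
  -- `T(vertex)` has no `Š`-edges, so any two maps on `Γ(T(vertex))` agree.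
  Set.eq_univ_of_forall fun _ =>
    ⟨fun _ => a, rfl, fun _ _ hy => hy.elim, funext fun e => e.2.elim⟩

/-- The transpose `A → Ω(B)` of a homomorphism `f : Γ(A) → B`: the entry at `t` of the image of `a`
consists of all `f ∘ Γ(h)` with `h : T(t) → A` a homomorphism sending the root to `a`. -/
def omegaTranspose {f : (GammaE Sc tq x A).dom → B.dom} (hf : IsHom (GammaE Sc tq x A) B f)
    (a : A.dom) : OmEDom Sc tq x B :=
  ⟨fun t => pullbacks f t.1.tree {h | h t.1.root = a},
    fun _ _ hg => isHom_of_mem_pullbacks hf hg, fun _ => pullbacks_vertex f a⟩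

theorem exists_isHom_restrE_eq {f : (GammaE Sc tq x A).dom → B.dom}
    (hf : IsHom (GammaE Sc tq x A) B f) {S : σ.symb} {ts : Fin (σ.ar S) → VTerm σ}
    {a : Fin (σ.ar S) → A.dom} (ha : a ∈ A.rel S)
    {g : (GammaE Sc tq x (ETerm.tree S ts)).dom → B.dom}
    (hg : ∀ i, restrE Sc tq x B S ts i g ∈ UextE Sc tq x B (omegaTranspose hf (a i)) (ts i)) :
    ∃ (h : (ETerm.tree S ts).dom → A.dom) (hh : IsHom (ETerm.tree S ts) A h),
      h ∘ edgeRoot S ts = a ∧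
      ∀ i, restrE Sc tq x B S ts i g = restrE Sc tq x B S ts i (f ∘ hh.gammaMap) := by
  choose h hroot hh hgh using fun i => (mem_UextE.1 (hg i)).2
  have hglue : (fun v : edgeDom S ts => h v.1 v.2) ∘ edgeRoot S ts = a := funext hroot
  exact ⟨fun v => h v.1 v.2, isHom_edgeTree_iff.2 ⟨hh, hglue ▸ ha⟩, hglue, hgh⟩

theorem timesNE_omegaTranspose_subset {f : (GammaE Sc tq x A).dom → B.dom}
    (hf : IsHom (GammaE Sc tq x A) B f) {S : σ.symb} (hS : S ≠ Sc) (ts : Fin (σ.ar S) → VTerm σ)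
    {a : Fin (σ.ar S) → A.dom} (ha : a ∈ A.rel S) :
    timesNE Sc tq x B S ts (omegaTranspose hf ∘ a) ⊆
      pullbacks f (ETerm.tree S ts) {h | h ∘ edgeRoot S ts = a} := by
  intro g hg
  obtain ⟨h, hh, hroot, hbranch⟩ := exists_isHom_restrE_eq hf ha hg
  exact ⟨h, hroot, hh, eq_of_restrE_eq_of_ne hS hbranch⟩

theorem timesW_omegaTranspose_subset {f : (GammaE Sc tq x A).dom → B.dom}
    (hf : IsHom (GammaE Sc tq x A) B f) (ts : Fin (σ.ar Sc) → VTerm σ)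
    {a : Fin (σ.ar Sc) → A.dom} (ha : a ∈ A.rel Sc) :
    timesW Sc tq x B ts (omegaTranspose hf ∘ a) (f ⟨a, ha⟩) ⊆
      pullbacks f (ETerm.tree Sc ts) {h | h ∘ edgeRoot Sc ts = a} := by
  rintro g ⟨hg, hgroot⟩
  obtain ⟨h, hh, hroot, hbranch⟩ := exists_isHom_restrE_eq hf ha hg
  have hf_root : f ⟨a, ha⟩ = (f ∘ hh.gammaMap) ⟨edgeRoot Sc ts, rootEdgeMem Sc ts⟩ :=
    congrArg f (Subtype.ext hroot.symm)
  exact ⟨h, hroot, hh, eq_of_restrE_eq_of_root_eq hbranch (hgroot.trans hf_root)⟩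

theorem edgeCondition_omegaTranspose {f : (GammaE Sc tq x A).dom → B.dom}
    (hf : IsHom (GammaE Sc tq x A) B f) {S : σ.symb} {ts : Fin (σ.ar S) → VTerm σ}
    {a : Fin (σ.ar S) → A.dom} {X : Set ((GammaE Sc tq x (ETerm.tree S ts)).dom → B.dom)}
    (hX : X ⊆ pullbacks f (ETerm.tree S ts) {h | h ∘ edgeRoot S ts = a}) :
    EdgeCondition (omegaTranspose hf ∘ a) ts X :=
  ⟨fun i hi _ hg => mem_UextE.2 ⟨hi, pullbacks_mono f (fun _ hroot => congrFun hroot i) (hX hg)⟩,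
    fun _ hg => isHom_of_mem_pullbacks hf (hX hg)⟩

theorem isHom_omegaTranspose {f : (GammaE Sc tq x A).dom → B.dom}
    (hf : IsHom (GammaE Sc tq x A) B f) :
    IsHom A (OmegaE Sc tq x B) (omegaTranspose hf) := by
  intro S a ha
  by_cases hS : S = Sc
  · subst hS
    exact mem_rel_OmegaE_self.2 ⟨f ⟨a, ha⟩, isWitness_iff_edgeCondition.2 fun ts _ =>
      edgeCondition_omegaTranspose hf (timesW_omegaTranspose_subset hf ts ha)⟩
  · exact (mem_rel_OmegaE_of_ne hS).2 fun ts _ =>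
      edgeCondition_omegaTranspose hf (timesNE_omegaTranspose_subset hf hS ts ha)

/-! ### From `A → Ω(B)` to `Γ(A) → B` -/

theorem exists_edgeCondition_comp_gammaMap_mem {φ : A.dom → OmEDom Sc tq x B}
    (hφ : IsHom A (OmegaE Sc tq x B) φ) {f : (GammaE Sc tq x A).dom → B.dom}
    (hf : ∀ e, IsWitness Sc tq x B (φ ∘ e.1) (f e))
    {S : σ.symb} {ts : Fin (σ.ar S) → VTerm σ} (hts : ts ∈ TEs tq S)
    {h : (ETerm.tree S ts).dom → A.dom} (hh : IsHom (ETerm.tree S ts) A h)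
    (hbranch : ∀ i, restrE Sc tq x B S ts i (f ∘ hh.gammaMap) ∈
      UextE Sc tq x B (φ (h (edgeRoot S ts i))) (ts i)) :
    ∃ X, EdgeCondition (φ ∘ h ∘ edgeRoot S ts) ts X ∧ f ∘ hh.gammaMap ∈ X := by
  by_cases hS : S = Sc
  · subst hS
    have hwitness := hf (hh.gammaMap ⟨edgeRoot S ts, rootEdgeMem S ts⟩)
    exact ⟨_, isWitness_iff_edgeCondition.1 hwitness ts hts, hbranch, rfl⟩
  · have hedge := hφ S _ (isHom_edgeTree_iff.1 hh).2
    exact ⟨_, (mem_rel_OmegaE_of_ne hS).1 hedge ts hts, hbranch⟩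

theorem comp_gammaMap_mem_UextE {φ : A.dom → OmEDom Sc tq x B}
    (hφ : IsHom A (OmegaE Sc tq x B) φ) {f : (GammaE Sc tq x A).dom → B.dom}
    (hf : ∀ e, IsWitness Sc tq x B (φ ∘ e.1) (f e)) {t : VTerm σ} (ht : t ∈ TVs tq)
    {h : t.tree.dom → A.dom} (hh : IsHom t.tree A h) :
    f ∘ hh.gammaMap ∈ UextE Sc tq x B (φ (h t.root)) t := by
  induction t with
  | vertex => exact mem_UextE.2 ⟨ht, (φ _).2.2 ht ▸ Set.mem_univ _⟩
  | pr S i ts ih =>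
    have hts : ts ∈ TEs tq S := mem_TEs_of_pr_mem_TVs ht
    obtain ⟨X, hX, hmem⟩ := exists_edgeCondition_comp_gammaMap_mem hφ hf hts hh fun j =>
      ih j (mem_TVs_of_mem_TEs hts j) ((isHom_edgeTree_iff.1 hh).1 j)
    exact hX.1 i ht _ hmem

theorem isHom_comp_gammaMap {φ : A.dom → OmEDom Sc tq x B}
    (hφ : IsHom A (OmegaE Sc tq x B) φ) {f : (GammaE Sc tq x A).dom → B.dom}
    (hf : ∀ e, IsWitness Sc tq x B (φ ∘ e.1) (f e)) {R : τ.symb}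
    {h : (tq R).tree.dom → A.dom} (hh : IsHom (tq R).tree A h) :
    IsHom (GammaE Sc tq x (tq R).tree) B (f ∘ hh.gammaMap) := by
  generalize hT : tq R = T at h hh
  rcases T with t | ⟨S, ts⟩
  · exact isHom_of_mem_UextE (comp_gammaMap_mem_UextE hφ hf (mem_TVs_of_eq_inl hT) hh)
  · have hts : ts ∈ TEs tq S := mem_TEs_of_eq_inr hT
    obtain ⟨X, hX, hmem⟩ := exists_edgeCondition_comp_gammaMap_mem hφ hf hts hh fun j =>
      comp_gammaMap_mem_UextE hφ hf (mem_TVs_of_mem_TEs hts j) ((isHom_edgeTree_iff.1 hh).1 j)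
    exact hX.2 _ hmem

theorem isHom_of_forall_isWitness (hx : ∀ R i, x R i ∈ ((tq R).tree).rel Sc)
    {φ : A.dom → OmEDom Sc tq x B} (hφ : IsHom A (OmegaE Sc tq x B) φ)
    {f : (GammaE Sc tq x A).dom → B.dom} (hf : ∀ e, IsWitness Sc tq x B (φ ∘ e.1) (f e)) :
    IsHom (GammaE Sc tq x A) B f := by
  rintro R y ⟨h, hh, hy⟩
  have hselected : y = fun i => hh.gammaMap ⟨x R i, hx R i⟩ :=
    funext fun i => Subtype.ext (hy i)
  rw [hselected]
  exact isHom_comp_gammaMap hφ hf hh R _ (selectedEdges_mem_rel_GammaE hx R)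

end

/-- for the Pultr template with `P = Š₁` (a single `Š`-edge, `Š = Sc`) and
trees `Q_R = T(tq R)` with selected `Š`-edges `x R i`, the functor `Ω` is a right adjoint to
the central Pultr functor `Γ`. -/
theorem omegaE_right_adjoint {σ τ : Signature} (Sc : σ.symb) (tq : τ.symb → Term σ)
    (x : ∀ R : τ.symb, Fin (τ.ar R) → (Fin (σ.ar Sc) → ((tq R).tree).dom))
    (hx : ∀ R i, x R i ∈ ((tq R).tree).rel Sc)
    (A : Struct σ) (B : Struct τ) :
    HomEx (GammaE Sc tq x A) B ↔ HomEx A (OmegaE Sc tq x B) := by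
  constructor
  · rintro ⟨f, hf⟩
    exact ⟨omegaTranspose hf, isHom_omegaTranspose hf⟩
  · rintro ⟨φ, hφ⟩
    choose f hf using fun e : (GammaE Sc tq x A).dom => mem_rel_OmegaE_self.1 (hφ Sc e.1 e.2)
    exact ⟨f, isHom_of_forall_isWitness hx hφ hf⟩
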